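/- Let P be a polytope of dimension n that is not combinatorially equivalent to any product Q × R of two polytopes each of dimension at least 1, and suppose P has at least 2n + 3 facets each of which (regarded as a polytope) is also not combinatorially equivalent to any product of two polytopes each of dimension at least 1. Then P is not combinatorially equivalent to the nestohedron P_B of any connected building set B on any ground set [m]. -/

import Mathlib

open Pointwise

namespace GalD

/-- A polytope in `ℝ^d`: the convex hull of a finite set of points. -/
def IsPolytope {d : ℕ} (P : Set (Fin d → ℝ)) : Prop :=
  ∃ V : Finset (Fin d → ℝ), P = convexHull ℝ (V : Set (Fin d → ℝ))

/-- A face of `P`: a nonempty exposed face of `P` (`P` itself included). -/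
def IsFaceOf {d : ℕ} (F P : Set (Fin d → ℝ)) : Prop :=
  F.Nonempty ∧ IsExposed ℝ P F

/-- The dimension of a set: the rank of the direction of its affine span. -/
noncomputable def polyDim {d : ℕ} (P : Set (Fin d → ℝ)) : ℕ :=
  Module.finrank ℝ (affineSpan ℝ P).direction

/-- A facet: a face of dimension `dim P - 1`. -/
def IsFacetOf {d : ℕ} (F P : Set (Fin d → ℝ)) : Prop :=
  IsFaceOf F P ∧ polyDim F + 1 = polyDim P

/-- A vertex: a point spanning a face of dimension 0. -/
def IsVertexOf {d : ℕ} (v : Fin d → ℝ) (P : Set (Fin d → ℝ)) : Prop :=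
  IsFaceOf {v} P

/-- A simple polytope: every vertex is contained in exactly `dim P` facets. -/
def IsSimplePolytope {d : ℕ} (P : Set (Fin d → ℝ)) : Prop :=
  IsPolytope P ∧ ∀ v, IsVertexOf v P →
    {F : Set (Fin d → ℝ) | IsFacetOf F P ∧ v ∈ F}.ncard = polyDim P

/-- A flag polytope: simple, and every collection of pairwise intersecting facets
has a nonempty common intersection. -/
def IsFlagPolytope {d : ℕ} (P : Set (Fin d → ℝ)) : Prop :=
  IsSimplePolytope P ∧
  ∀ 𝒮 : Set (Set (Fin d → ℝ)), 𝒮.Nonempty → (∀ F ∈ 𝒮, IsFacetOf F P) →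
    (∀ F ∈ 𝒮, ∀ G ∈ 𝒮, (F ∩ G).Nonempty) → (⋂₀ 𝒮).Nonempty

/-- Combinatorial equivalence: an order isomorphism between the face posets. -/
def CombEquiv {d₁ d₂ : ℕ} (P : Set (Fin d₁ → ℝ)) (Q : Set (Fin d₂ → ℝ)) : Prop :=
  Nonempty ({F : Set (Fin d₁ → ℝ) // IsFaceOf F P} ≃o
            {G : Set (Fin d₂ → ℝ) // IsFaceOf G Q})

/-- The product of a set in `ℝ^{d₁}` and a set in `ℝ^{d₂}`, inside `ℝ^{d₁+d₂}`. -/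
def polyProd {d₁ d₂ : ℕ} (Q : Set (Fin d₁ → ℝ)) (R : Set (Fin d₂ → ℝ)) :
    Set (Fin (d₁ + d₂) → ℝ) :=
  {x | (fun i => x (Fin.castAdd d₂ i)) ∈ Q ∧ (fun j => x (Fin.natAdd d₁ j)) ∈ R}

/-- `P` is not combinatorially equivalent to a nontrivial product of two polytopes. -/
def Indecomposable {d : ℕ} (P : Set (Fin d → ℝ)) : Prop :=
  ¬ ∃ (d₁ d₂ : ℕ) (Q : Set (Fin d₁ → ℝ)) (R : Set (Fin d₂ → ℝ)),
    IsPolytope Q ∧ IsPolytope R ∧ 1 ≤ polyDim Q ∧ 1 ≤ polyDim R ∧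
    CombEquiv P (polyProd Q R)

/-- A building set on the ground set `V`. -/
structure IsBuildingSetOn {m : ℕ} (V : Finset (Fin m)) (B : Finset (Finset (Fin m))) :
    Prop where
  subset_ground : ∀ S ∈ B, S ⊆ V
  nonempty_mem : ∀ S ∈ B, S.Nonempty
  singleton_mem : ∀ i ∈ V, ({i} : Finset (Fin m)) ∈ B
  ground_mem : V ∈ B
  union_mem : ∀ S₁ ∈ B, ∀ S₂ ∈ B, (S₁ ∩ S₂).Nonempty → S₁ ∪ S₂ ∈ B

/-- A connected building set on `[m]`. -/
def IsConnectedBuildingSet (m : ℕ) (B : Finset (Finset (Fin m))) : Prop :=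
  IsBuildingSetOn (Finset.univ : Finset (Fin m)) B

/-- The nestohedron `P_B`: the Minkowski sum of the simplices `Δ_S`, `S ∈ B`. -/
noncomputable def nestohedron (m : ℕ) (B : Finset (Finset (Fin m))) :
    Set (Fin m → ℝ) :=
  ∑ S ∈ B, convexHull ℝ ((fun i => (Pi.single i 1 : Fin m → ℝ)) '' (S : Set (Fin m)))

/-- A diagonal of a convex `N`-gon with vertices labelled by `ZMod N`. -/
def IsDiag (N : ℕ) (e : Finset (ZMod N)) : Prop :=
  ∃ a b : ZMod N, e = {a, b} ∧ b ≠ a ∧ b ≠ a + 1 ∧ b ≠ a - 1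

/-- `c` lies strictly between `a` and `b` on the arc from `a` to `b` (counterclockwise). -/
def StrictBtw (N : ℕ) (a c b : ZMod N) : Prop :=
  0 < (c - a).val ∧ (c - a).val < (b - a).val

/-- Two diagonals cross: their endpoints alternate around the circle. -/
def Crosses (N : ℕ) (e f : Finset (ZMod N)) : Prop :=
  ∃ a b c d : ZMod N, e = {a, b} ∧ f = {c, d} ∧
    StrictBtw N a c b ∧ StrictBtw N b d a

/-- Image of a diagonal under the central symmetry `a ↦ a + n` of the `2n`-gon. -/
def centralSym (n : ℕ) (e : Finset (ZMod (2 * n))) : Finset (ZMod (2 * n)) :=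
  e.image (· + (n : ZMod (2 * n)))

/-- A diameter of the `2n`-gon: a diagonal `{a, a + n}`. -/
def IsDiameter (n : ℕ) (e : Finset (ZMod (2 * n))) : Prop :=
  ∃ a : ZMod (2 * n), e = {a, a + (n : ZMod (2 * n))}

/-- Raw elements of the type `D_n` model: symmetric pairs of diagonals,
red diameters and blue diameters. -/
inductive DElem (n : ℕ) where
  | pair : Finset (Finset (ZMod (2 * n))) → DElem n
  | red  : Finset (ZMod (2 * n)) → DElem n
  | blue : Finset (ZMod (2 * n)) → DElem n

/-- Membership in the set `M_n` of the type `D_n` model. -/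
def memM (n : ℕ) : DElem n → Prop
  | .pair s => ∃ e, IsDiag (2 * n) e ∧ ¬ IsDiameter n e ∧ s = {e, centralSym n e}
  | .red e => IsDiag (2 * n) e ∧ IsDiameter n e
  | .blue e => IsDiag (2 * n) e ∧ IsDiameter n e

/-- Compatibility of elements of the type `D_n` model. -/
def DCompat (n : ℕ) : DElem n → DElem n → Prop
  | .pair s, .pair t => ∀ e ∈ s, ∀ f ∈ t, ¬ Crosses (2 * n) e f
  | .pair s, .red e => ∀ f ∈ s, ¬ Crosses (2 * n) e f
  | .pair s, .blue e => ∀ f ∈ s, ¬ Crosses (2 * n) e f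
  | .red e, .pair s => ∀ f ∈ s, ¬ Crosses (2 * n) e f
  | .blue e, .pair s => ∀ f ∈ s, ¬ Crosses (2 * n) e f
  | .red _, .red _ => True
  | .blue _, .blue _ => True
  | .red e, .blue f => e = f
  | .blue e, .red f => e = f

/-- The set `M_n` of the type `D_n` model, as a type. -/
def MSet (n : ℕ) := {x : DElem n // memM n x}

/-- `P` realizes the type `D_n` model via the bijection `φ`. -/
def RealizesDWith (n : ℕ) {d : ℕ} (P : Set (Fin d → ℝ))
    (φ : MSet n → Set (Fin d → ℝ)) : Prop :=
  IsPolytope P ∧ IsFlagPolytope P ∧ polyDim P = n ∧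
  (∀ x, IsFacetOf (φ x) P) ∧ Function.Injective φ ∧
  (∀ F, IsFacetOf F P → ∃ x, φ x = F) ∧
  ∀ x y : MSet n, x ≠ y → ((φ x ∩ φ y).Nonempty ↔ DCompat n x.1 y.1)

/-- `P` realizes the type `D_n` model. -/
def RealizesD (n : ℕ) {d : ℕ} (P : Set (Fin d → ℝ)) : Prop :=
  ∃ φ, RealizesDWith n P φ

/-- Elements of the type `A_k` model: diagonals of a convex `(k+3)`-gon. -/
def ASet (k : ℕ) := {e : Finset (ZMod (k + 3)) // IsDiag (k + 3) e}

/-- `P` realizes the type `A_k` model via the bijection `φ`. -/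
def RealizesAWith (k : ℕ) {d : ℕ} (P : Set (Fin d → ℝ))
    (φ : ASet k → Set (Fin d → ℝ)) : Prop :=
  IsPolytope P ∧ IsFlagPolytope P ∧ polyDim P = k ∧
  (∀ x, IsFacetOf (φ x) P) ∧ Function.Injective φ ∧
  (∀ F, IsFacetOf F P → ∃ x, φ x = F) ∧
  ∀ x y : ASet k, x ≠ y → ((φ x ∩ φ y).Nonempty ↔ ¬ Crosses (k + 3) x.1 y.1)

/-- `P` realizes the type `A_k` model. -/
def RealizesA (k : ℕ) {d : ℕ} (P : Set (Fin d → ℝ)) : Prop :=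
  ∃ φ, RealizesAWith k P φ

/-- A closed halfspace in `ℝ^d`. -/
def IsClosedHalfspace {d : ℕ} (H : Set (Fin d → ℝ)) : Prop :=
  ∃ (l : (Fin d → ℝ) →ₗ[ℝ] ℝ) (c : ℝ), l ≠ 0 ∧ H = {x | l x ≤ c}

/-- `P'` is obtained from `P` by shaving off a face of codimension 2. -/
def ObtainedByShaving {d : ℕ} (P P' : Set (Fin d → ℝ)) : Prop :=
  ∃ G H : Set (Fin d → ℝ), IsFaceOf G P ∧ polyDim G + 2 = polyDim P ∧
    IsClosedHalfspace H ∧ G ∩ H = ∅ ∧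
    (∀ v, IsVertexOf v P → v ∉ G → v ∈ interior H) ∧ P' = P ∩ H

/-- The restriction `B|_S` of a building set. -/
def restrictBS {m : ℕ} (B : Finset (Finset (Fin m))) (S : Finset (Fin m)) :
    Finset (Finset (Fin m)) :=
  B.filter (· ⊆ S)

/-- The contraction `B / S` of a building set. -/
def contractBS {m : ℕ} (B : Finset (Finset (Fin m))) (S : Finset (Fin m)) :
    Finset (Finset (Fin m)) :=
  (B.filter (fun S'' => ¬ S'' ⊆ S)).image (fun S'' => S'' \ S)

/-- The subset of the nestohedron `P_B` on which `x ↦ ∑_{i ∈ S} x i` is minimized. -/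
def minFace (m : ℕ) (B : Finset (Finset (Fin m))) (S : Finset (Fin m)) :
    Set (Fin m → ℝ) :=
  {x ∈ nestohedron m B | ∀ y ∈ nestohedron m B, ∑ i ∈ S, x i ≤ ∑ i ∈ S, y i}

/-!
A proper face of `P_B` lies in `minFace m B S` for some proper `S ∈ B`: if the face is cut out by
the weights `a`, take `S` maximal in `B` among the sets on which `a` stays below a fixed value that
it attains. Hence every facet is some `minFace m B S`. This face is the Minkowski sum of a
nestohedron in the coordinates in `S` and a sum of simplices in the other coordinates, so it is a
product of two polytopes, both of positive dimension unless `S` or its complement is a singleton.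
Thus a polytope combinatorially equivalent to `P_B` has at most `2m` indecomposable facets, while a
flag of `m` faces of `P_B` shows that its dimension is at least `m - 1`.
-/

section Exposed

variable {𝕜 E : Type*} [Field 𝕜] [LinearOrder 𝕜] [TopologicalSpace 𝕜]
  [AddCommGroup E] [Module 𝕜 E] [TopologicalSpace E]

theorem toExposed_congr {l k : StrongDual 𝕜 E} {A : Set E} (h : Set.EqOn l k A) :
    l.toExposed A = k.toExposed A := by
  ext x
  exact and_congr_right fun hx => forall₂_congr fun y hy => by rw [h hx, h hy]

theorem toExposed_image {F : Type*} [AddCommGroup F] [Module 𝕜 F] [TopologicalSpace F]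
    (L : E →L[𝕜] F) (l : StrongDual 𝕜 F) (A : Set E) :
    l.toExposed (L '' A) = L '' (l.comp L).toExposed A := by
  ext y
  constructor
  · rintro ⟨⟨x, hx, rfl⟩, hmax⟩
    exact ⟨x, ⟨hx, fun z hz => hmax _ ⟨z, hz, rfl⟩⟩, rfl⟩
  · rintro ⟨x, ⟨hx, hmax⟩, rfl⟩
    exact ⟨⟨x, hx, rfl⟩, Set.forall_mem_image.2 hmax⟩

theorem vectorSpan_lt_of_isExposed {F A : Set E} (hF : IsExposed 𝕜 A F) (hne : F.Nonempty)
    (hFA : F ≠ A) : vectorSpan 𝕜 F < vectorSpan 𝕜 A := by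
  obtain ⟨x, hx⟩ := hne
  obtain ⟨z, hzA, hzF⟩ := Set.exists_of_ssubset (hF.subset.ssubset_of_ne hFA)
  obtain ⟨l, rfl⟩ := hF ⟨x, hx⟩
  have hker : vectorSpan 𝕜 {x ∈ A | ∀ y ∈ A, l y ≤ l x} ≤ LinearMap.ker l.toLinearMap := by
    refine Submodule.span_le.2 ?_
    rintro _ ⟨u, hu, v, hv, rfl⟩
    simp [(hv.2 u hu.1).antisymm (hu.2 v hv.1)]
  refine (vectorSpan_mono 𝕜 hF.subset).lt_of_not_ge fun hle => hzF ⟨hzA, fun y hy => ?_⟩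
  have hlz : l z = l x := by
    simpa [sub_eq_zero] using hker (hle (vsub_mem_vectorSpan 𝕜 hzA hx.1))
  exact hlz ▸ hx.2 y hy

variable [IsStrictOrderedRing 𝕜]

theorem add_mem_toExposed_add_iff {l : StrongDual 𝕜 E} {A C : Set E} {x y : E}
    (hx : x ∈ A) (hy : y ∈ C) :
    x + y ∈ l.toExposed (A + C) ↔ x ∈ l.toExposed A ∧ y ∈ l.toExposed C := by
  constructor
  · rintro ⟨-, hmax⟩
    refine ⟨⟨hx, fun z hz => ?_⟩, ⟨hy, fun z hz => ?_⟩⟩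
    · simpa using hmax (z + y) (Set.add_mem_add hz hy)
    · simpa using hmax (x + z) (Set.add_mem_add hx hz)
  · rintro ⟨⟨-, hxmax⟩, ⟨-, hymax⟩⟩
    refine ⟨Set.add_mem_add hx hy, ?_⟩
    rintro _ ⟨u, hu, v, hv, rfl⟩
    simpa using add_le_add (hxmax u hu) (hymax v hv)

theorem sum_mem_toExposed_sum_iff {ι : Type*} {l : StrongDual 𝕜 E} {s : Finset ι}
    {A : ι → Set E} {x : ι → E} (hx : ∀ i ∈ s, x i ∈ A i) :
    ∑ i ∈ s, x i ∈ l.toExposed (∑ i ∈ s, A i) ↔ ∀ i ∈ s, x i ∈ l.toExposed (A i) := by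
  classical
  induction s using Finset.induction_on with
  | empty => simp [ContinuousLinearMap.toExposed]
  | insert i s hi ih =>
    obtain ⟨hxi, hxs⟩ := (Finset.forall_mem_insert _ _ _).1 hx
    rw [Finset.sum_insert hi, Finset.sum_insert hi, Finset.forall_mem_insert,
      add_mem_toExposed_add_iff hxi (Set.finsetSum_mem_finsetSum _ _ _ hxs), ih hxs]

theorem toExposed_sum {ι : Type*} (l : StrongDual 𝕜 E) (s : Finset ι) (A : ι → Set E) :
    l.toExposed (∑ i ∈ s, A i) = ∑ i ∈ s, l.toExposed (A i) := by
  refine Set.Subset.antisymm (fun x hx => ?_) (fun x hx => ?_)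
  · obtain ⟨g, hg, rfl⟩ := (Set.mem_finsetSum _ _ _).1 hx.1
    exact Set.finsetSum_mem_finsetSum _ _ _
      ((sum_mem_toExposed_sum_iff fun i hi => hg hi).1 hx)
  · obtain ⟨g, hg, rfl⟩ := (Set.mem_finsetSum _ _ _).1 hx
    exact (sum_mem_toExposed_sum_iff fun i hi => (hg hi).1).2 fun i hi => hg hi

theorem toExposed_convexHull (l : StrongDual 𝕜 E) (V : Set E) :
    l.toExposed (convexHull 𝕜 V) = convexHull 𝕜 (l.toExposed V) := by
  refine Set.Subset.antisymm ?_ (convexHull_min ?_ ?_)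
  · rintro x ⟨hx, hmax⟩
    obtain ⟨ι, _, w, v, hw0, hw1, hv, rfl⟩ := mem_convexHull_iff_exists_fintype.1 hx
    set M := l (∑ i, w i • v i)
    have hle : ∀ y ∈ V, l y ≤ M := fun y hy => hmax y (subset_convexHull 𝕜 V hy)
    have hsum : ∑ i, w i * (M - l (v i)) = 0 := by
      simp [M, mul_sub, Finset.sum_sub_distrib, ← Finset.sum_mul, hw1]
    have hzero : ∀ i, w i * (M - l (v i)) = 0 := fun i =>
      (Finset.sum_eq_zero_iff_of_nonneg fun i _ =>
        mul_nonneg (hw0 i) (sub_nonneg.2 (hle _ (hv i)))).1 hsum i (Finset.mem_univ i)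
    rw [← finsum_eq_sum_of_fintype] at hw1 ⊢
    refine (convex_convexHull 𝕜 _).finsum_mem hw0 hw1 fun i hi => subset_convexHull 𝕜 _ ?_
    have hli : l (v i) = M :=
      (sub_eq_zero.1 ((mul_eq_zero.1 (hzero i)).resolve_left hi)).symm
    exact ⟨hv i, fun y hy => hli ▸ hle y hy⟩
  · rintro x ⟨hx, hmax⟩
    exact ⟨subset_convexHull 𝕜 V hx, fun y hy =>
      convexHull_min hmax (convex_halfSpace_le l.toLinearMap.isLinear (l x)) hy⟩
  · exact ContinuousLinearMap.toExposed.isExposed.convex (convex_convexHull 𝕜 V)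

theorem exists_toExposed_smul_add_eq [IsTopologicalRing 𝕜] (l k : StrongDual 𝕜 E) {V : Set E}
    (hV : V.Finite) : ∃ N : 𝕜, (N • l + k).toExposed V = k.toExposed (l.toExposed V) := by
  -- For large `N`, the functional `N • l + k` compares points lexicographically by `(l, k)`.
  have hlarge : ∀ x ∈ V, ∀ y ∈ V, ∀ᶠ N : 𝕜 in Filter.atTop,
      l x < l y → (N • l + k) x < (N • l + k) y := by
    intro x _ y _
    by_cases hxy : l x < l y
    · filter_upwards [(Filter.tendsto_id.atTop_mul_const (sub_pos.2 hxy)).eventually_gt_atTop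
        (k x - k y)] with N hN _
      simp only [id, add_apply, smul_apply, smul_eq_mul] at hN ⊢
      linarith
    · exact Filter.Eventually.of_forall fun _ h => absurd h hxy
  obtain ⟨N, hN⟩ := (hV.eventually_all.2 fun x hx => hV.eventually_all.2 (hlarge x hx)).exists
  refine ⟨N, Set.Subset.antisymm ?_ ?_⟩
  · rintro x ⟨hx, hmax⟩
    have hlx : ∀ y ∈ V, l y ≤ l x := fun y hy =>
      le_of_not_gt fun h => (hmax y hy).not_gt (hN x hx y hy h)
    refine ⟨⟨hx, hlx⟩, fun y hy => ?_⟩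
    have hxy : l x = l y := (hy.2 x hx).antisymm (hlx y hy.1)
    simpa [hxy] using hmax y hy.1
  · rintro x ⟨⟨hx, hlx⟩, hkx⟩
    refine ⟨hx, fun y hy => ?_⟩
    rcases (hlx y hy).lt_or_eq with hlt | heq
    · exact (hN y hy x hx hlt).le
    · simpa [heq] using hkx y ⟨hy, fun z hz => heq ▸ hlx z hz⟩

theorem isExposed_trans_of_finite [IsTopologicalRing 𝕜] {V F G : Set E} (hV : V.Finite)
    (hF : IsExposed 𝕜 (convexHull 𝕜 V) F) (hG : IsExposed 𝕜 F G) :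
    IsExposed 𝕜 (convexHull 𝕜 V) G := by
  intro hGne
  obtain ⟨l, rfl⟩ := hF (hGne.mono hG.subset)
  obtain ⟨k, rfl⟩ := hG hGne
  obtain ⟨N, hN⟩ := exists_toExposed_smul_add_eq l k hV
  refine ⟨N • l + k, ?_⟩
  change k.toExposed (l.toExposed _) = (N • l + k).toExposed _
  simp only [toExposed_convexHull, hN]

end Exposed

section FacePoset

variable {d e : ℕ} {P : Set (Fin d → ℝ)} {Q : Set (Fin e → ℝ)}

/-- The poset of faces of `P`, ordered by inclusion; combinatorial equivalence is isomorphism of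
these posets. -/
abbrev FacePoset (P : Set (Fin d → ℝ)) := {F : Set (Fin d → ℝ) // IsFaceOf F P}

theorem IsFaceOf.subset {F : Set (Fin d → ℝ)} (hF : IsFaceOf F P) : F ⊆ P := hF.2.subset

theorem IsFaceOf.refl (hP : P.Nonempty) : IsFaceOf P P := ⟨hP, IsExposed.refl P⟩

theorem IsFaceOf.mono {F G : Set (Fin d → ℝ)} (hF : IsFaceOf F P) (hG : IsFaceOf G P)
    (hGF : G ⊆ F) : IsFaceOf G F :=
  ⟨hG.1, hG.2.mono hF.subset hGF⟩

theorem IsFaceOf.trans {F G : Set (Fin d → ℝ)} (hP : IsPolytope P) (hF : IsFaceOf F P)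
    (hG : IsFaceOf G F) : IsFaceOf G P := by
  obtain ⟨V, rfl⟩ := hP
  exact ⟨hG.1, isExposed_trans_of_finite V.finite_toSet hF.2 hG.2⟩

theorem IsFaceOf.polyDim_lt {F : Set (Fin d → ℝ)} (hF : IsFaceOf F P) (hFP : F ≠ P) :
    polyDim F < polyDim P := by
  unfold polyDim
  rw [direction_affineSpan, direction_affineSpan]
  exact Submodule.finrank_lt_finrank_of_lt (vectorSpan_lt_of_isExposed hF.2 hF.1 hFP)

theorem strictMono_polyDim_facePoset : StrictMono fun F : FacePoset P => polyDim F.1 :=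
  fun F G hFG => (G.2.mono F.2 hFG.le).polyDim_lt fun h => hFG.ne (Subtype.ext h)

theorem polyDim_mono {A C : Set (Fin d → ℝ)} (h : A ⊆ C) : polyDim A ≤ polyDim C := by
  unfold polyDim
  rw [direction_affineSpan, direction_affineSpan]
  exact Submodule.finrank_mono (vectorSpan_mono ℝ h)

theorem card_le_polyDim_add_one {ι : Type*} [Fintype ι] [LinearOrder ι] {c : ι → FacePoset P}
    (hc : StrictMono c) : Fintype.card ι ≤ polyDim P + 1 := by
  have hlt : ∀ i, polyDim (c i).1 < polyDim P + 1 := fun i =>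
    Nat.lt_succ_of_le (polyDim_mono (c i).2.subset)
  have hinj : Function.Injective fun i => (⟨polyDim (c i).1, hlt i⟩ : Fin (polyDim P + 1)) :=
    fun i j h => (strictMono_polyDim_facePoset.comp hc).injective (Fin.ext_iff.1 h)
  simpa using Fintype.card_le_of_injective _ hinj

theorem one_le_polyDim_of_nontrivial {A : Set (Fin d → ℝ)} (hA : A.Nontrivial) :
    1 ≤ polyDim A := by
  rw [polyDim, direction_affineSpan, Submodule.one_le_finrank_iff, Ne,
    vectorSpan_eq_bot_iff_subsingleton]
  exact hA.not_subsingleton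

theorem val_eq_of_isTop {T : FacePoset P} (hT : IsTop T) : T.1 = P :=
  T.2.subset.antisymm (hT ⟨P, IsFaceOf.refl (T.2.1.mono T.2.subset)⟩)

theorem IsFacetOf.covBy_of_isTop {F : Set (Fin d → ℝ)} (hF : IsFacetOf F P)
    {T : FacePoset P} (hT : IsTop T) : (⟨F, hF.1⟩ : FacePoset P) ⋖ T := by
  have hdim : polyDim F + 1 = polyDim T.1 := by rw [val_eq_of_isTop hT, hF.2]
  refine ⟨(hT _).lt_of_ne fun h => ?_, fun G hFG hGT => ?_⟩
  · simp [← h] at hdim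
  · have := strictMono_polyDim_facePoset hFG
    have := strictMono_polyDim_facePoset hGT
    grind

/-- The faces of a face of a polytope are the faces of the polytope contained in it. -/
def facePosetIso (hP : IsPolytope P) (F : FacePoset P) : FacePoset F.1 ≃o Set.Iic F where
  toFun G := ⟨⟨G.1, F.2.trans hP G.2⟩, G.2.subset⟩
  invFun G := ⟨G.1.1, F.2.mono G.1.2 G.2⟩
  left_inv _ := rfl
  right_inv _ := rfl
  map_rel_iff' := Iff.rfl

theorem combEquiv_face (hP : IsPolytope P) (hQ : IsPolytope Q) (φ : FacePoset P ≃o FacePoset Q)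
    (F : FacePoset P) : CombEquiv F.1 (φ F).1 := by
  let φF : Set.Iic F ≃o Set.Iic (φ F) :=
    { toEquiv := φ.toEquiv.subtypeEquiv fun _ => φ.le_iff_le.symm
      map_rel_iff' := φ.le_iff_le }
  exact ⟨(facePosetIso hP F).trans (φF.trans (facePosetIso hQ (φ F)).symm)⟩

theorem CombEquiv.trans {f : ℕ} {R : Set (Fin f → ℝ)} :
    CombEquiv P Q → CombEquiv Q R → CombEquiv P R := fun ⟨φ⟩ ⟨ψ⟩ => ⟨φ.trans ψ⟩

theorem CombEquiv.symm : CombEquiv P Q → CombEquiv Q P := fun ⟨φ⟩ => ⟨φ.symm⟩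

theorem Indecomposable.of_combEquiv (hP : Indecomposable P) (h : CombEquiv P Q) :
    Indecomposable Q :=
  fun ⟨d₁, d₂, Q₁, Q₂, h₁, h₂, hd₁, hd₂, hQ⟩ =>
    hP ⟨d₁, d₂, Q₁, Q₂, h₁, h₂, hd₁, hd₂, h.trans hQ⟩

theorem isFaceOf_iff {F : Set (Fin d → ℝ)} :
    IsFaceOf F P ↔ F.Nonempty ∧ ∃ l : StrongDual ℝ (Fin d → ℝ), F = l.toExposed P :=
  and_congr_right fun hF => forall_prop_of_true hF

theorem isFaceOf_image_iff {L : (Fin d → ℝ) →L[ℝ] (Fin e → ℝ)}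
    {M : (Fin e → ℝ) →L[ℝ] (Fin d → ℝ)} (hML : Set.LeftInvOn M L P) {F : Set (Fin d → ℝ)}
    (hFP : F ⊆ P) : IsFaceOf (L '' F) (L '' P) ↔ IsFaceOf F P := by
  simp only [isFaceOf_iff, Set.image_nonempty, toExposed_image]
  refine and_congr_right fun _ => ⟨?_, ?_⟩
  · rintro ⟨l, hl⟩
    exact ⟨l.comp L, (hML.injOn.image_eq_image_iff hFP fun x hx => hx.1).1 hl⟩
  · rintro ⟨l, rfl⟩
    refine ⟨l.comp M, congrArg _ (toExposed_congr fun x hx => ?_)⟩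
    simp [hML hx]

theorem combEquiv_image {L : (Fin d → ℝ) →L[ℝ] (Fin e → ℝ)}
    {M : (Fin e → ℝ) →L[ℝ] (Fin d → ℝ)} (hML : Set.LeftInvOn M L P) :
    CombEquiv P (L '' P) := by
  let φ : FacePoset P ↪o FacePoset (L '' P) :=
    { toFun := fun F => ⟨L '' F.1, (isFaceOf_image_iff hML F.2.subset).2 F.2⟩
      inj' := fun F G h => Subtype.ext
        ((hML.injOn.image_eq_image_iff F.2.subset G.2.subset).1 (Subtype.ext_iff.1 h))
      map_rel_iff' := fun {F G} => hML.injOn.image_subset_image_iff F.2.subset G.2.subset }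
  refine ⟨RelIso.ofSurjective φ ?_⟩
  rintro ⟨G, hG⟩
  obtain ⟨F, hFP, rfl⟩ := Set.subset_image_iff.1 hG.subset
  exact ⟨⟨F, (isFaceOf_image_iff hML hFP).1 hG⟩, rfl⟩

end FacePoset
section Product

variable {d : ℕ} {Q R : Set (Fin d → ℝ)}

/-- The linear map `(x, y) ↦ x + y`, with the domain written as in `polyProd`. -/
def addHalves (d : ℕ) : (Fin (d + d) → ℝ) →L[ℝ] (Fin d → ℝ) :=
  .pi fun i => .proj (Fin.castAdd d i) + .proj (Fin.natAdd d i)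

/-- The linear map `x ↦ (x|_S, x|_{Sᶜ})`, with the codomain written as in `polyProd`. -/
def splitHalves (S : Finset (Fin d)) : (Fin d → ℝ) →L[ℝ] (Fin (d + d) → ℝ) :=
  .pi (Fin.append (fun i => if i ∈ S then .proj i else 0) fun i => if i ∈ S then 0 else .proj i)

theorem addHalves_image_polyProd (Q R : Set (Fin d → ℝ)) :
    addHalves d '' polyProd Q R = Q + R := by
  refine Set.Subset.antisymm ?_ ?_
  · rintro _ ⟨z, ⟨hQ, hR⟩, rfl⟩
    exact ⟨_, hQ, _, hR, rfl⟩
  · rintro _ ⟨x, hx, y, hy, rfl⟩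
    refine ⟨Fin.append x y, ⟨by simpa only [Fin.append_left] using hx,
      by simpa only [Fin.append_right] using hy⟩, ?_⟩
    ext i
    simp [addHalves, -Fin.natAdd_eq_addNat]

theorem leftInvOn_splitHalves_addHalves {S : Finset (Fin d)} (hQ : ∀ x ∈ Q, ∀ i ∉ S, x i = 0)
    (hR : ∀ y ∈ R, ∀ i ∈ S, y i = 0) :
    Set.LeftInvOn (splitHalves S) (addHalves d) (polyProd Q R) := by
  rintro z ⟨hzQ, hzR⟩
  ext i
  refine Fin.addCases (fun i => ?_) (fun i => ?_) i <;> by_cases hi : i ∈ S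
  · simpa [splitHalves, addHalves, hi, -Fin.natAdd_eq_addNat] using hR _ hzR i hi
  · simpa [splitHalves, addHalves, hi, -Fin.natAdd_eq_addNat] using (hQ _ hzQ i hi).symm
  · simpa [splitHalves, addHalves, hi, -Fin.natAdd_eq_addNat] using (hR _ hzR i hi).symm
  · simpa [splitHalves, addHalves, hi, -Fin.natAdd_eq_addNat] using hQ _ hzQ i hi

theorem combEquiv_add_polyProd {S : Finset (Fin d)} (hQ : ∀ x ∈ Q, ∀ i ∉ S, x i = 0)
    (hR : ∀ y ∈ R, ∀ i ∈ S, y i = 0) : CombEquiv (Q + R) (polyProd Q R) :=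
  addHalves_image_polyProd Q R ▸
    (combEquiv_image (leftInvOn_splitHalves_addHalves hQ hR)).symm

end Product

section Argmax

variable {ι α : Type*} [LinearOrder α]

/-- The set of maximizers of `a` on `T`. -/
def argmaxOn (a : ι → α) (T : Finset ι) : Finset ι := {i ∈ T | ∀ j ∈ T, a j ≤ a i}

theorem mem_argmaxOn {a : ι → α} {T : Finset ι} {i : ι} :
    i ∈ argmaxOn a T ↔ i ∈ T ∧ ∀ j ∈ T, a j ≤ a i :=
  Finset.mem_filter

theorem argmaxOn_subset (a : ι → α) (T : Finset ι) : argmaxOn a T ⊆ T :=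
  Finset.filter_subset _ _

theorem argmaxOn_nonempty (a : ι → α) {T : Finset ι} (hT : T.Nonempty) :
    (argmaxOn a T).Nonempty :=
  let ⟨i, hi, hmax⟩ := T.exists_max_image a hT
  ⟨i, mem_argmaxOn.2 ⟨hi, hmax⟩⟩

end Argmax

section SimplexSum

variable {κ : Type*} {m : ℕ}

/-- The simplex `Δ_T`, the convex hull of the standard basis vectors `e_i` with `i ∈ T`. -/
def coordSimplex (T : Finset (Fin m)) : Set (Fin m → ℝ) :=
  convexHull ℝ ((fun i => (Pi.single i 1 : Fin m → ℝ)) '' (T : Set (Fin m)))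

/-- The Minkowski sum of the simplices `Δ_{h T}`, `T ∈ I`. Allowing an arbitrary family `h` keeps
track of repeated summands, which appear in the faces of nestohedra. -/
noncomputable def simplexSum (I : Finset κ) (h : κ → Finset (Fin m)) : Set (Fin m → ℝ) :=
  ∑ T ∈ I, coordSimplex (h T)

/-- The linear functional `x ↦ ∑ i, a i * x i`. -/
noncomputable def weightFunctional (a : Fin m → ℝ) : StrongDual ℝ (Fin m → ℝ) :=
  ∑ i, a i • ContinuousLinearMap.proj i

theorem weightFunctional_apply (a x : Fin m → ℝ) : weightFunctional a x = ∑ i, a i * x i := by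
  simp [weightFunctional]

theorem weightFunctional_single (a : Fin m → ℝ) (i : Fin m) :
    weightFunctional a (Pi.single i 1) = a i := by
  simp [weightFunctional_apply, Pi.single_apply]

theorem weightFunctional_surjective : Function.Surjective (weightFunctional (m := m)) := fun l =>
  ⟨fun i => l (Pi.single i 1), ContinuousLinearMap.coe_inj.1 <| LinearMap.pi_ext' fun i =>
    LinearMap.ext_ring (weightFunctional_single _ i)⟩

theorem single_mem_coordSimplex {T : Finset (Fin m)} {i : Fin m} (hi : i ∈ T) :
    (Pi.single i 1 : Fin m → ℝ) ∈ coordSimplex T :=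
  subset_convexHull ℝ _ (Set.mem_image_of_mem _ hi)

theorem coordSimplex_mono {T U : Finset (Fin m)} (h : T ⊆ U) : coordSimplex T ⊆ coordSimplex U :=
  convexHull_mono (Set.image_mono (Finset.coe_subset.2 h))

theorem toExposed_coordSimplex (a : Fin m → ℝ) (T : Finset (Fin m)) :
    (weightFunctional a).toExposed (coordSimplex T) = coordSimplex (argmaxOn a T) := by
  rw [coordSimplex, toExposed_convexHull, coordSimplex]
  congr 1
  ext x
  constructor
  · rintro ⟨⟨i, hi, rfl⟩, hmax⟩
    refine ⟨i, mem_argmaxOn.2 ⟨hi, fun j hj => ?_⟩, rfl⟩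
    simpa only [weightFunctional_single] using hmax _ (Set.mem_image_of_mem _ hj)
  · rintro ⟨i, hi, rfl⟩
    obtain ⟨hiT, hmax⟩ := mem_argmaxOn.1 hi
    refine ⟨Set.mem_image_of_mem _ hiT, Set.forall_mem_image.2 fun j hj => ?_⟩
    simpa only [weightFunctional_single] using hmax j hj

theorem toExposed_simplexSum (a : Fin m → ℝ) (I : Finset κ) (h : κ → Finset (Fin m)) :
    (weightFunctional a).toExposed (simplexSum I h) = simplexSum I fun T => argmaxOn a (h T) := by
  simp only [simplexSum, toExposed_sum, toExposed_coordSimplex]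

theorem isPolytope_simplexSum (I : Finset κ) (h : κ → Finset (Fin m)) :
    IsPolytope (simplexSum I h) :=
  ⟨∑ T ∈ I, (h T).image fun i => Pi.single i 1, by
    simp [simplexSum, coordSimplex, Finset.coe_sum, convexHull_sum]⟩

theorem simplexSum_nonempty {I : Finset κ} {h : κ → Finset (Fin m)}
    (hne : ∀ T ∈ I, (h T).Nonempty) : (simplexSum I h).Nonempty := by
  have hne' : ∀ T ∈ I, (coordSimplex (h T)).Nonempty := fun T hT =>
    let ⟨_, hi⟩ := hne T hT; ⟨_, single_mem_coordSimplex hi⟩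
  choose! g hg using hne'
  exact ⟨_, Set.finsetSum_mem_finsetSum _ _ g hg⟩

theorem coordSimplex_nontrivial {T : Finset (Fin m)} (hT : T.Nontrivial) :
    (coordSimplex T).Nontrivial := by
  have hinj : Function.Injective fun i => (Pi.single i 1 : Fin m → ℝ) := by
    simpa only [← Pi.basisFun_apply] using (Pi.basisFun ℝ (Fin m)).injective
  exact (Set.Nontrivial.image hT hinj).mono (subset_convexHull ℝ _)

theorem simplexSum_nontrivial {I : Finset κ} {h : κ → Finset (Fin m)}
    (hne : ∀ T ∈ I, (h T).Nonempty) {T : κ} (hT : T ∈ I) (hnt : (h T).Nontrivial) :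
    (simplexSum I h).Nontrivial := by
  classical
  rw [simplexSum, ← Finset.add_sum_erase I _ hT]
  exact (coordSimplex_nontrivial hnt).add_right
    (simplexSum_nonempty fun U hU => hne U (Finset.mem_of_mem_erase hU))

theorem eq_zero_of_mem_simplexSum {I : Finset κ} {h : κ → Finset (Fin m)} {i : Fin m}
    (hi : ∀ T ∈ I, i ∉ h T) {x : Fin m → ℝ} (hx : x ∈ simplexSum I h) : x i = 0 := by
  obtain ⟨g, hg, rfl⟩ := (Set.mem_finsetSum _ _ _).1 hx
  let H : Submodule ℝ (Fin m → ℝ) := (LinearMap.proj i).ker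
  have hH : ∀ T ∈ I, coordSimplex (h T) ⊆ H := fun T hT =>
    convexHull_min (Set.image_subset_iff.2 fun j hj => 
      Pi.single_eq_of_ne (ne_of_mem_of_not_mem hj (hi T hT)).symm 1) H.convex
  exact H.sum_mem fun T hT => hH T hT (hg hT)

end SimplexSum
section Nestohedron

variable {m : ℕ} {B : Finset (Finset (Fin m))}

/-- The face of the nestohedron on which the functional with weights `a` is maximal. -/
noncomputable def nestFace (B : Finset (Finset (Fin m))) (a : Fin m → ℝ) : Set (Fin m → ℝ) :=
  (weightFunctional a).toExposed (nestohedron m B)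

theorem nestFace_eq_simplexSum (B : Finset (Finset (Fin m))) (a : Fin m → ℝ) :
    nestFace B a = simplexSum B (argmaxOn a) :=
  toExposed_simplexSum a B id

theorem nestFace_zero (B : Finset (Finset (Fin m))) : nestFace B 0 = nestohedron m B := by
  simp [nestFace, ContinuousLinearMap.toExposed, weightFunctional_apply]

theorem isFaceOf_nestFace (hB : ∀ T ∈ B, T.Nonempty) (a : Fin m → ℝ) :
    IsFaceOf (nestFace B a) (nestohedron m B) := by
  refine isFaceOf_iff.2 ⟨?_, weightFunctional a, rfl⟩
  rw [nestFace_eq_simplexSum]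
  exact simplexSum_nonempty fun T hT => argmaxOn_nonempty a (hB T hT)

theorem IsFaceOf.exists_eq_nestFace {F : Set (Fin m → ℝ)} (hF : IsFaceOf F (nestohedron m B)) :
    ∃ a, F = nestFace B a := by
  obtain ⟨-, l, rfl⟩ := isFaceOf_iff.1 hF
  obtain ⟨a, rfl⟩ := weightFunctional_surjective l
  exact ⟨a, rfl⟩

theorem nestFace_subset_iff (hB : ∀ T ∈ B, T.Nonempty) {a c : Fin m → ℝ} :
    nestFace B a ⊆ nestFace B c ↔ ∀ T ∈ B, argmaxOn a T ⊆ argmaxOn c T := by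
  constructor
  · intro hsub T hT i hi
    have : Nonempty (Fin m) := ⟨i⟩
    choose! b hb using fun U hU => argmaxOn_nonempty a (hB U hU)
    let v : Finset (Fin m) → Fin m → ℝ := fun U => Pi.single (Function.update b T i U) 1
    have hv : ∀ U ∈ B, v U ∈ coordSimplex (argmaxOn a U) := by
      intro U hU
      rcases eq_or_ne U T with rfl | hUT
      · simpa [v] using single_mem_coordSimplex hi
      · simpa [v, hUT] using single_mem_coordSimplex (hb U hU)
    have hvB : ∑ U ∈ B, v U ∈ nestFace B c :=
      hsub (nestFace_eq_simplexSum B a ▸ Set.finsetSum_mem_finsetSum _ _ _ hv)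
    have hvT : v T ∈ (weightFunctional c).toExposed (coordSimplex T) :=
      (sum_mem_toExposed_sum_iff fun U hU =>
        coordSimplex_mono (argmaxOn_subset a U) (hv U hU)).1 hvB T hT
    refine mem_argmaxOn.2 ⟨argmaxOn_subset a T hi, fun j hj => ?_⟩
    simpa [v, weightFunctional_single] using hvT.2 _ (single_mem_coordSimplex hj)
  · intro h
    rw [nestFace_eq_simplexSum, nestFace_eq_simplexSum]
    exact Set.finsetSum_subset_finsetSum _ _ _ fun T hT => coordSimplex_mono (h T hT)

/-- Minus the indicator function of `S`, the weights of the functional maximized on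
`minFace m B S`. -/
def negIndicator (S : Finset (Fin m)) : Fin m → ℝ := fun i => if i ∈ S then -1 else 0

theorem minFace_eq_nestFace (B : Finset (Finset (Fin m))) (S : Finset (Fin m)) :
    minFace m B S = nestFace B (negIndicator S) := by
  simp [minFace, nestFace, ContinuousLinearMap.toExposed, weightFunctional_apply, negIndicator]

theorem argmaxOn_negIndicator (S T : Finset (Fin m)) :
    argmaxOn (negIndicator S) T = if T ⊆ S then T else T \ S := by
  ext i
  rw [mem_argmaxOn]
  split_ifs with hTS
  · refine and_iff_left_of_imp fun hi j hj => ?_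
    simp [negIndicator, hTS hi, hTS hj]
  · obtain ⟨j, hjT, hjS⟩ := Finset.not_subset.1 hTS
    rw [Finset.mem_sdiff]
    refine and_congr_right fun _ => ⟨fun hmax hiS => ?_, fun hiS k _ => ?_⟩
    · have := hmax j hjT
      norm_num [negIndicator, hiS, hjS] at this
    · simp only [negIndicator, hiS, if_false]
      split_ifs <;> norm_num

theorem isFaceOf_minFace (hB : ∀ T ∈ B, T.Nonempty) (S : Finset (Fin m)) :
    IsFaceOf (minFace m B S) (nestohedron m B) :=
  minFace_eq_nestFace B S ▸ isFaceOf_nestFace hB _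

theorem minFace_ne_nestohedron (hB : IsConnectedBuildingSet m B) {S : Finset (Fin m)}
    (hS : S.Nonempty) (hSu : S ≠ Finset.univ) : minFace m B S ≠ nestohedron m B := by
  intro h
  obtain ⟨i, hi⟩ := hS
  have hsub : nestFace B 0 ⊆ nestFace B (negIndicator S) := by
    rw [nestFace_zero, ← minFace_eq_nestFace, h]
  have hiu : i ∈ argmaxOn (negIndicator S) Finset.univ :=
    (nestFace_subset_iff hB.nonempty_mem).1 hsub _ hB.ground_mem (by simp [mem_argmaxOn])
  simp [argmaxOn_negIndicator, Finset.univ_subset_iff, hSu, hi] at hiu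

theorem exists_nestFace_subset_minFace (hB : IsConnectedBuildingSet m B) {a : Fin m → ℝ}
    (hne : nestFace B a ≠ nestohedron m B) :
    ∃ S ∈ B, S ≠ Finset.univ ∧ nestFace B a ⊆ minFace m B S := by
  obtain ⟨p, q, hpq⟩ : ∃ p q, a p < a q := by
    by_contra! hconst
    refine hne (Set.Subset.antisymm (fun x hx => hx.1) ?_)
    rw [← nestFace_zero, nestFace_subset_iff hB.nonempty_mem]
    exact fun T _ i hi => mem_argmaxOn.2 ⟨argmaxOn_subset _ T hi, fun j _ => hconst i j⟩
  obtain ⟨S, hS⟩ := (B.filter fun S => ∀ i ∈ S, a i < a q).exists_maximal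
    ⟨{p}, by simpa [hpq] using hB.singleton_mem p (Finset.mem_univ p)⟩
  obtain ⟨hSB, hSq⟩ := Finset.mem_filter.1 hS.prop
  refine ⟨S, hSB, fun h => (hSq q (h ▸ Finset.mem_univ q)).false, ?_⟩
  rw [minFace_eq_nestFace, nestFace_subset_iff hB.nonempty_mem]
  intro T hT i hi
  obtain ⟨hiT, hmax⟩ := mem_argmaxOn.1 hi
  rw [argmaxOn_negIndicator]
  split_ifs with hTS
  · exact hiT
  refine Finset.mem_sdiff.2 ⟨hiT, fun hiS => hTS ?_⟩
  -- Otherwise `S ∪ T` contradicts the maximality of `S`.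
  have hunion : S ∪ T ∈ B := hB.union_mem S hSB T hT ⟨i, Finset.mem_inter.2 ⟨hiS, hiT⟩⟩
  have hlt : ∀ j ∈ S ∪ T, a j < a q := fun j hj =>
    (Finset.mem_union.1 hj).elim (hSq j) fun hjT => (hmax j hjT).trans_lt (hSq i hiS)
  exact Finset.union_subset_right
    (hS.le_of_ge (Finset.mem_filter.2 ⟨hunion, hlt⟩) Finset.subset_union_left)

theorem exists_eq_minFace_of_covBy (hB : IsConnectedBuildingSet m B)
    {F T : FacePoset (nestohedron m B)} (hT : IsTop T) (hFT : F ⋖ T) :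
    ∃ S ∈ B, S ≠ Finset.univ ∧ F.1 = minFace m B S := by
  obtain ⟨a, ha⟩ := F.2.exists_eq_nestFace
  have hFne : F.1 ≠ nestohedron m B := fun h =>
    hFT.ne (Subtype.ext (h.trans (val_eq_of_isTop hT).symm))
  obtain ⟨S, hSB, hSu, hsub⟩ := exists_nestFace_subset_minFace hB (ha ▸ hFne)
  let M : FacePoset (nestohedron m B) := ⟨minFace m B S, isFaceOf_minFace hB.nonempty_mem S⟩
  have hMT : M ≠ T := fun h => minFace_ne_nestohedron hB (hB.nonempty_mem S hSB) hSu
    ((Subtype.ext_iff.1 h).trans (val_eq_of_isTop hT))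
  have hFM : F ≤ M := ha.trans_subset hsub
  exact ⟨S, hSB, hSu, Subtype.ext_iff.1 ((hFT.eq_or_eq hFM (hT M)).resolve_right hMT).symm⟩

theorem minFace_eq_add (B : Finset (Finset (Fin m))) (S : Finset (Fin m)) :
    minFace m B S =
      nestohedron m (restrictBS B S) + simplexSum (B.filter (¬ · ⊆ S)) (· \ S) := by
  have hargmax : minFace m B S = simplexSum B fun T => if T ⊆ S then T else T \ S := by
    simp only [minFace_eq_nestFace, nestFace_eq_simplexSum, simplexSum, argmaxOn_negIndicator]
  rw [hargmax, simplexSum, ← Finset.sum_filter_add_sum_filter_not B (· ⊆ S)]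
  congr 1 <;> refine Finset.sum_congr rfl fun T hT => ?_
  · rw [if_pos (Finset.mem_filter.1 hT).2, coordSimplex]
  · rw [if_neg (Finset.mem_filter.1 hT).2]

theorem not_indecomposable_minFace (hB : IsConnectedBuildingSet m B) {S : Finset (Fin m)}
    (hSB : S ∈ B) (hS : S.Nontrivial) (hSc : Sᶜ.Nontrivial) :
    ¬ Indecomposable (minFace m B S) := by
  have hu : Finset.univ ∈ B.filter (¬ · ⊆ S) := by
    refine Finset.mem_filter.2 ⟨hB.ground_mem, fun h => hSc.nonempty.ne_empty ?_⟩
    rw [Finset.univ_subset_iff.1 h, Finset.compl_univ]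
  have hQ : (nestohedron m (restrictBS B S)).Nontrivial :=
    simplexSum_nontrivial (h := id) (fun T hT => hB.nonempty_mem T (Finset.mem_filter.1 hT).1)
      (Finset.mem_filter.2 ⟨hSB, subset_rfl⟩) hS
  have hR : (simplexSum (B.filter (¬ · ⊆ S)) (· \ S)).Nontrivial :=
    simplexSum_nontrivial (fun T hT => Finset.sdiff_nonempty.2 (Finset.mem_filter.1 hT).2) hu
      (Finset.compl_eq_univ_sdiff S ▸ hSc)
  rw [minFace_eq_add]
  refine not_not_intro ⟨m, m, _, _, isPolytope_simplexSum _ id, isPolytope_simplexSum _ _,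
    one_le_polyDim_of_nontrivial hQ, one_le_polyDim_of_nontrivial hR,
    combEquiv_add_polyProd (S := S) (fun x hx i hi => ?_) (fun y hy i hi => ?_)⟩
  · exact eq_zero_of_mem_simplexSum (I := restrictBS B S) (h := id)
      (fun T hT h => hi ((Finset.mem_filter.1 hT).2 h)) hx
  · exact eq_zero_of_mem_simplexSum (h := (· \ S))
      (fun T _ h => (Finset.mem_sdiff.1 h).2 hi) hy

theorem exists_eq_minFace_singleton_or_compl (hB : IsConnectedBuildingSet m B)
    {F T : FacePoset (nestohedron m B)} (hT : IsTop T) (hFT : F ⋖ T) (hF : Indecomposable F.1) :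
    ∃ i, F.1 = minFace m B {i} ∨ F.1 = minFace m B {i}ᶜ := by
  obtain ⟨S, hSB, hSu, hFS⟩ := exists_eq_minFace_of_covBy hB hT hFT
  have hSne : S.Nonempty := hB.nonempty_mem S hSB
  have hScne : Sᶜ.Nonempty :=
    Finset.nonempty_iff_ne_empty.2 (mt S.compl_eq_empty_iff.1 hSu)
  rcases hSne.exists_eq_singleton_or_nontrivial with ⟨i, rfl⟩ | hS
  · exact ⟨i, .inl hFS⟩
  rcases hScne.exists_eq_singleton_or_nontrivial with ⟨i, hi⟩ | hSc
  · exact ⟨i, .inr (hi ▸ (compl_compl S).symm ▸ hFS)⟩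
  · exact absurd (hFS ▸ hF) (not_indecomposable_minFace hB hSB hS hSc)

/-- Weights whose faces increase with `k`: the argmax of these weights on `T` is `{min T}` if
`k ≤ min T` and `T ∩ [0, k]` otherwise. -/
def flagWeight (k : Fin m) : Fin m → ℝ := fun i => -((max i k : Fin m) : ℝ)

theorem strictMono_nestFace_flagWeight (hB : IsConnectedBuildingSet m B) :
    StrictMono fun k => (⟨nestFace B (flagWeight k), isFaceOf_nestFace hB.nonempty_mem _⟩ :
      FacePoset (nestohedron m B)) := by
  intro k l hkl
  refine lt_of_le_not_ge ((nestFace_subset_iff hB.nonempty_mem).2 fun T _ i hi => ?_) fun hle => ?_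
  · obtain ⟨hiT, hmax⟩ := mem_argmaxOn.1 hi
    refine mem_argmaxOn.2 ⟨hiT, fun j hj => ?_⟩
    have := hmax j hj
    simp only [flagWeight, neg_le_neg_iff, Nat.cast_le, Fin.val_fin_le] at this ⊢
    grind
  · have hl : l ∈ argmaxOn (flagWeight l) Finset.univ := by
      simp [mem_argmaxOn, flagWeight]
    have hlk := (nestFace_subset_iff hB.nonempty_mem).1 hle _ hB.ground_mem hl
    simpa [flagWeight, hkl.le, hkl.not_ge] using (mem_argmaxOn.1 hlk).2 k (Finset.mem_univ k)

theorem le_polyDim_add_one_of_combEquiv {d : ℕ} {P : Set (Fin d → ℝ)}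
    (hB : IsConnectedBuildingSet m B) (h : CombEquiv P (nestohedron m B)) :
    m ≤ polyDim P + 1 := by
  obtain ⟨φ⟩ := h
  simpa using card_le_polyDim_add_one
    (φ.symm.strictMono.comp (strictMono_nestFace_flagWeight hB))

theorem ncard_indecomposable_facets_le {d : ℕ} {P : Set (Fin d → ℝ)} (hP : IsPolytope P)
    (hB : IsConnectedBuildingSet m B) (h : CombEquiv P (nestohedron m B)) :
    {F : Set (Fin d → ℝ) | IsFacetOf F P ∧ Indecomposable F}.ncard ≤ 2 * m := by
  obtain ⟨φ⟩ := h
  let M : Finset (Fin m) → FacePoset (nestohedron m B) := fun S =>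
    ⟨minFace m B S, isFaceOf_minFace hB.nonempty_mem S⟩
  let candidate : Fin m ⊕ Fin m → Set (Fin d → ℝ) :=
    Sum.elim (fun i => (φ.symm (M {i})).1) fun i => (φ.symm (M {i}ᶜ)).1
  have hsub : {F | IsFacetOf F P ∧ Indecomposable F} ⊆ Set.range candidate := by
    rintro F ⟨hF, hFind⟩
    let T : FacePoset P := ⟨P, IsFaceOf.refl (hF.1.1.mono hF.1.subset)⟩
    have hT : IsTop T := fun G => G.2.subset
    have hφT : IsTop (φ T) := fun G => φ.symm_apply_le.1 (hT _)
    have hcov : φ ⟨F, hF.1⟩ ⋖ φ T := (apply_covBy_apply_iff φ).2 (hF.covBy_of_isTop hT)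
    have hφF : Indecomposable (φ ⟨F, hF.1⟩).1 :=
      hFind.of_combEquiv (combEquiv_face hP (isPolytope_simplexSum B id) φ ⟨F, hF.1⟩)
    have hpre : ∀ S, (φ ⟨F, hF.1⟩).1 = minFace m B S → (φ.symm (M S)).1 = F := fun S hS =>
      Subtype.ext_iff.1 (φ.symm_apply_eq.2 (Subtype.ext hS.symm : M S = φ ⟨F, hF.1⟩))
    obtain ⟨i, hi | hi⟩ := exists_eq_minFace_singleton_or_compl hB hφT hcov hφF
    · exact ⟨.inl i, hpre _ hi⟩
    · exact ⟨.inr i, hpre _ hi⟩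
  calc _ ≤ (Set.range candidate).ncard := Set.ncard_le_ncard hsub (Set.finite_range _)
    _ ≤ Nat.card (Fin m ⊕ Fin m) := by
      rw [← Nat.card_coe_set_eq]
      exact Finite.card_range_le _
    _ = 2 * m := by simp [two_mul]

end Nestohedron

/-- an indecomposable polytope of dimension `n` with at least `2n + 3`
indecomposable facets is not a nestohedron. -/
theorem not_nestohedron_of_many_indecomposable_facets (n d : ℕ)
    (P : Set (Fin d → ℝ)) (hpoly : IsPolytope P) (hdim : polyDim P = n)
    (hind : Indecomposable P)
    (hfac : 2 * n + 3 ≤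
      {F : Set (Fin d → ℝ) | IsFacetOf F P ∧ Indecomposable F}.ncard) :
    ¬ ∃ (m : ℕ) (B : Finset (Finset (Fin m))),
        IsConnectedBuildingSet m B ∧ CombEquiv P (nestohedron m B) := by
  rintro ⟨m, B, hB, h⟩
  have hcard := ncard_indecomposable_facets_le hpoly hB h
  have hm := le_polyDim_add_one_of_combEquiv hB h
  omega

end GalD
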